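/- arXiv:2504.00821 — 9 statements merged into one kernel-verified Lean document; each statement's English description precedes it below -/
import Mathlib

section
/- Let R be an integral domain of characteristic zero and let δ ∈ R be nonzero. If λ : R[X] → R is an R-linear map such that λ((X + C δ)^N − X^N) = 0 for every integer N ≥ 1 (where C δ denotes the constant polynomial δ), then λ(P) = 0 for every polynomial P ∈ R[X]. -/
/-- Inductive core of part (1) of the abelian Ihara lemma: an `R`-linear functional on `R[X]`
(`R` an integral domain of characteristic zero) vanishing on `(X + C δ)^N - X^N` for all
`N ≥ 1` (with `δ ≠ 0`) vanishes identically. -/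
theorem abelian_ihara_dual_vanishing {R : Type*} [CommRing R] [IsDomain R] [CharZero R]
    (δ : R) (hδ : δ ≠ 0) (lam : Polynomial R →ₗ[R] R)
    (h : ∀ N : ℕ, 1 ≤ N → lam ((Polynomial.X + Polynomial.C δ) ^ N - Polynomial.X ^ N) = 0) :
    ∀ P : Polynomial R, lam P = 0 := by
  have key : ∀ n : ℕ, lam (Polynomial.X ^ n) = 0 := by
    intro n
    induction n using Nat.strong_induction_on with
    | _ n ih =>
      have h1 := h (n + 1) (by omega)
      have term : ∀ m : ℕ, lam (Polynomial.X ^ m * Polynomial.C δ ^ (n + 1 - m) *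
          (((n + 1).choose m : ℕ) : Polynomial R)) =
          (δ ^ (n + 1 - m) * ((n + 1).choose m : R)) * lam (Polynomial.X ^ m) := by
        intro m
        rw [← smul_eq_mul (a := δ ^ (n + 1 - m) * ((n + 1).choose m : R)), ← map_smul,
          Polynomial.smul_eq_C_mul]
        congr 1
        simp only [map_mul, map_pow, map_natCast]
        ring
      rw [map_sub, add_pow, map_sum, Finset.sum_congr rfl (fun m _ => term m),
        Finset.sum_range_succ, Finset.sum_range_succ,
        Finset.sum_eq_zero (fun m hm => by rw [ih m (Finset.mem_range.mp hm), mul_zero])] at h1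
      have hn : ((n : R) + 1) ≠ 0 := by exact_mod_cast Nat.succ_ne_zero n
      simpa [hδ, hn] using h1
  intro P
  rw [P.as_sum_range_C_mul_X_pow, map_sum]
  refine Finset.sum_eq_zero (fun m _ => ?_)
  rw [← Polynomial.smul_eq_C_mul, map_smul, key, smul_zero]
end

section
/- Let G be a group, Γ a subgroup of G, H a group, π : G → H a group homomorphism, R a commutative ring, and A an R-module equipped with a right action of H by R-linear automorphisms (written a·h). For a subgroup U of G, let F(U, A) denote the R-module of functions f : G → A such that f(γ·g·u) = f(g)·π(u) for all γ ∈ Γ, g ∈ G, u ∈ U. Suppose the double coset space Γ\G/U is finite with representatives x₁, …, x_h ∈ G. Then the evaluation map f ↦ (f(x₁), …, f(x_h)) is an R-module isomorphism from F(U, A) onto the direct sum over i = 1, …, h of the fixed-point submodules A^(i) := {a ∈ A : a·π(u) = a for all u ∈ x_i⁻¹Γx_i ∩ U}. -/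
open MulOpposite

/-- The space `F(U, A)` of `A`-valued automorphic forms: functions `f : G → A` with
`f (γ * g * u) = f g · π u` for `γ ∈ Γ`, `u ∈ U`; the right action of `H` on `A` by
`R`-linear automorphisms is encoded by a monoid homomorphism `ρ : Hᵐᵒᵖ →* Module.End R A`. -/
def AutForms {R G H A : Type*} [CommRing R] [Group G] [Group H]
    [AddCommGroup A] [Module R A]
    (Γ U : Subgroup G) (π : G →* H) (ρ : Hᵐᵒᵖ →* Module.End R A) :
    Submodule R (G → A) where
  carrier := {f | ∀ γ ∈ Γ, ∀ g : G, ∀ u ∈ U, f (γ * g * u) = ρ (op (π u)) (f g)}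
  add_mem' := by
    intro f₁ f₂ h₁ h₂ γ hγ g u hu
    simp only [Pi.add_apply, h₁ γ hγ g u hu, h₂ γ hγ g u hu, map_add]
  zero_mem' := by
    intro γ hγ g u hu
    simp
  smul_mem' := by
    intro r f hf γ hγ g u hu
    simp only [Pi.smul_apply, hf γ hγ g u hu, map_smul]

/-- The fixed-point submodule `A^(i) = {a ∈ A | a · π u = a for all u ∈ x⁻¹Γx ∩ U}`. -/
def FixedPts {R G H A : Type*} [CommRing R] [Group G] [Group H]
    [AddCommGroup A] [Module R A]
    (Γ U : Subgroup G) (π : G →* H) (ρ : Hᵐᵒᵖ →* Module.End R A) (x : G) :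
    Submodule R A where
  carrier := {a | ∀ u ∈ U, x * u * x⁻¹ ∈ Γ → ρ (op (π u)) a = a}
  add_mem' := by
    intro a b ha hb u hu hγ
    simp only [map_add, ha u hu hγ, hb u hu hγ]
  zero_mem' := by
    intro u hu hγ
    simp
  smul_mem' := by
    intro r a ha u hu hγ
    simp only [map_smul, ha u hu hγ]

/-- If `Γ\G/U` is finite with representatives `x₁, …, x_h`, then evaluation at the
representatives is an `R`-module isomorphism from `F(U, A)` onto the direct sum of the
fixed-point submodules `A^(i)` for `x_i⁻¹ Γ x_i ∩ U`. -/
theorem autForms_eval_equiv {R G H A : Type*} [CommRing R] [Group G] [Group H]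
    [AddCommGroup A] [Module R A]
    (Γ U : Subgroup G) (π : G →* H) (ρ : Hᵐᵒᵖ →* Module.End R A)
    {h : ℕ} (x : Fin h → G)
    (hx : ∀ g : G, ∃! i : Fin h, ∃ γ ∈ Γ, ∃ u ∈ U, g = γ * x i * u) :
    ∃ e : AutForms Γ U π ρ ≃ₗ[R] (∀ i : Fin h, FixedPts Γ U π ρ (x i)),
      ∀ (f : AutForms Γ U π ρ) (i : Fin h), (e f i : A) = (f : G → A) (x i) := by
  classical
  have hfix : ∀ (f : AutForms Γ U π ρ) (i : Fin h), (f : G → A) (x i) ∈ FixedPts Γ U π ρ (x i) := by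
    intro f i u hu hγ
    have h1 := f.2 1 Γ.one_mem (x i) u hu
    have h2 := f.2 _ hγ (x i) 1 U.one_mem
    have h3 : x i * u * (x i)⁻¹ * x i * 1 = 1 * x i * u := by group
    rw [h3, h1] at h2
    simpa using h2
  let ev : AutForms Γ U π ρ →ₗ[R] (∀ i : Fin h, FixedPts Γ U π ρ (x i)) :=
    { toFun := fun f i => ⟨(f : G → A) (x i), hfix f i⟩
      map_add' := fun _ _ => rfl
      map_smul' := fun _ _ => rfl }
  have hev : ∀ (f : AutForms Γ U π ρ) (i : Fin h), (ev f i : A) = (f : G → A) (x i) :=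
    fun _ _ => rfl
  have hinj : Function.Injective ev := by
    intro f₁ f₂ hf
    apply Subtype.ext
    funext g
    obtain ⟨i, ⟨γ, hγ, u, hu, rfl⟩, -⟩ := hx g
    have h0 : (f₁ : G → A) (x i) = (f₂ : G → A) (x i) := by
      rw [← hev, ← hev, hf]
    rw [f₁.2 γ hγ (x i) u hu, f₂.2 γ hγ (x i) u hu, h0]
  have hsurj : Function.Surjective ev := by
    intro a
    choose idx hidx huniq using hx
    choose c hc v hv hg using hidx
    have key : ∀ (g : G) (i : Fin h) (γ : G), γ ∈ Γ → ∀ u ∈ U, g = γ * x i * u →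
        ρ (op (π (v g))) (a (idx g) : A) = ρ (op (π u)) (a i : A) := by
      intro g i γ hγ u hu hgu
      have hi : i = idx g := huniq g i ⟨γ, hγ, u, hu, hgu⟩
      subst hi
      have hmem : x (idx g) * (v g * u⁻¹) * (x (idx g))⁻¹ ∈ Γ := by
        have h1 : c g * x (idx g) * v g = γ * x (idx g) * u := (hg g).symm.trans hgu
        have h2 : x (idx g) * (v g * u⁻¹) * (x (idx g))⁻¹ = (c g)⁻¹ * γ := by
          have h3 : x (idx g) * v g = (c g)⁻¹ * (γ * x (idx g) * u) := by
            rw [← h1]; group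
          rw [← mul_assoc, h3]; group
        rw [h2]
        exact Γ.mul_mem (Γ.inv_mem (hc g)) hγ
      have h4 := (a (idx g)).2 (v g * u⁻¹) (U.mul_mem (hv g) (U.inv_mem hu)) hmem
      have h5 : op (π (v g)) = op (π u) * op (π (v g * u⁻¹)) := by
        rw [← op_mul, ← map_mul]; simp
      rw [h5, map_mul, Module.End.mul_apply, h4]
    refine ⟨⟨fun g => ρ (op (π (v g))) (a (idx g) : A), ?_⟩, ?_⟩
    · intro γ hγ g u hu
      have h1 := key (γ * g * u) (idx g) (γ * c g) (Γ.mul_mem hγ (hc g)) (v g * u)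
        (U.mul_mem (hv g) hu) (by conv_lhs => rw [hg g]
                                  group)
      simp only [h1, map_mul, op_mul, Module.End.mul_apply]
    · funext i
      apply Subtype.ext
      rw [hev]
      have h1 := key (x i) i 1 Γ.one_mem 1 U.one_mem (by simp)
      simpa using h1
  exact ⟨LinearEquiv.ofBijective ev ⟨hinj, hsurj⟩, fun f i => hev f i⟩
end

section
/- Let G be a group, let Γ and V be subgroups of G, and let W be a subgroup of V. Assume the neatness condition that x⁻¹Γx ∩ V = {1} for every x ∈ G. Then for every y ∈ G, the map sending the right coset W·v (for v ∈ V) to the double coset Γ·(y·v⁻¹)·W is a well-defined bijection from the coset space W\V onto the set of double cosets Γ·z·W in Γ\G/W satisfying Γ·z·V = Γ·y·V (that is, onto the fiber over Γ·y·V of the natural surjection Γ\G/W → Γ\G/V). -/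
theorem doset_eq_aux {G : Type*} [Group G] (Γ W : Subgroup G) (a b : G) :
    {g : G | ∃ γ ∈ Γ, ∃ w ∈ W, g = γ * a * w} = {g : G | ∃ γ ∈ Γ, ∃ w ∈ W, g = γ * b * w} ↔
      ∃ γ ∈ Γ, ∃ w ∈ W, a = γ * b * w := by
  constructor
  · intro h
    have ha : a ∈ {g : G | ∃ γ ∈ Γ, ∃ w ∈ W, g = γ * a * w} :=
      ⟨1, Γ.one_mem, 1, W.one_mem, by simp⟩
    rw [h] at ha
    exact ha
  · rintro ⟨γ, hγ, w, hw, rfl⟩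
    ext g
    constructor
    · rintro ⟨δ, hδ, u, hu, rfl⟩
      exact ⟨δ * γ, Γ.mul_mem hδ hγ, w * u, W.mul_mem hw hu, by group⟩
    · rintro ⟨δ, hδ, u, hu, rfl⟩
      exact ⟨δ * γ⁻¹, Γ.mul_mem hδ (Γ.inv_mem hγ), w⁻¹ * u, W.mul_mem (W.inv_mem hw) hu,
        by group⟩

/-- Under neatness (`x⁻¹Γx ∩ V = 1` for all `x`), for `W ≤ V` and `y ∈ G`, the map
`W·v ↦ Γ·(y·v⁻¹)·W` is a well-defined bijection from `W\V` onto the fiber over `Γ·y·V`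
of the natural surjection `Γ\G/W → Γ\G/V`. The four clauses state respectively:
well-definedness, injectivity, that the image lies in the fiber, and surjectivity onto
the fiber. -/
theorem doset_fiber_bijection {G : Type*} [Group G] (Γ V W : Subgroup G) (hWV : W ≤ V)
    (hneat : ∀ x : G, ∀ γ ∈ Γ, x⁻¹ * γ * x ∈ V → γ = 1) (y : G) :
    (∀ v ∈ V, ∀ v' ∈ V, v * v'⁻¹ ∈ W →
      {g : G | ∃ γ ∈ Γ, ∃ w ∈ W, g = γ * (y * v⁻¹) * w} =
        {g : G | ∃ γ ∈ Γ, ∃ w ∈ W, g = γ * (y * v'⁻¹) * w}) ∧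
    (∀ v ∈ V, ∀ v' ∈ V,
      {g : G | ∃ γ ∈ Γ, ∃ w ∈ W, g = γ * (y * v⁻¹) * w} =
        {g : G | ∃ γ ∈ Γ, ∃ w ∈ W, g = γ * (y * v'⁻¹) * w} → v * v'⁻¹ ∈ W) ∧
    (∀ v ∈ V, {g : G | ∃ γ ∈ Γ, ∃ u ∈ V, g = γ * (y * v⁻¹) * u} =
        {g : G | ∃ γ ∈ Γ, ∃ u ∈ V, g = γ * y * u}) ∧
    (∀ z : G, {g : G | ∃ γ ∈ Γ, ∃ u ∈ V, g = γ * z * u} =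
        {g : G | ∃ γ ∈ Γ, ∃ u ∈ V, g = γ * y * u} →
      ∃ v ∈ V, {g : G | ∃ γ ∈ Γ, ∃ w ∈ W, g = γ * z * w} =
        {g : G | ∃ γ ∈ Γ, ∃ w ∈ W, g = γ * (y * v⁻¹) * w}) := by
  simp only [doset_eq_aux]
  refine ⟨?_, ?_, ?_, ?_⟩
  · intro v _ v' _ h
    exact ⟨1, Γ.one_mem, (v * v'⁻¹)⁻¹, W.inv_mem h, by group⟩
  · rintro v hv v' hv' ⟨γ, hγ, w, hw, h⟩
    have e : y⁻¹ * γ * y = v⁻¹ * w⁻¹ * v' := by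
      have : γ = y * v⁻¹ * w⁻¹ * v' * y⁻¹ := by rw [h]; group
      rw [this]; group
    have h1 : γ = 1 := hneat y γ hγ (by
      rw [e]
      exact V.mul_mem (V.mul_mem (V.inv_mem hv) (V.inv_mem (hWV hw))) hv')
    subst h1
    have h2 : v⁻¹ = v'⁻¹ * w := by
      have : y * v⁻¹ = y * (v'⁻¹ * w) := by rw [h]; group
      exact mul_left_cancel this
    have h3 : v * v'⁻¹ = w⁻¹ := by
      rw [← inv_inv v, h2]; group
    rw [h3]
    exact W.inv_mem hw
  · intro v hv
    exact ⟨1, Γ.one_mem, v⁻¹, V.inv_mem hv, by group⟩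
  · rintro z ⟨γ, hγ, u, hu, rfl⟩
    exact ⟨u⁻¹, V.inv_mem hu, γ, hγ, 1, W.one_mem, by group⟩
end

section
/- Let R₀ be a Noetherian, integrally closed integral domain of Krull dimension d. Let R₁ be a commutative R₀-algebra that is integral over R₀ and torsion-free as an R₀-module. Then R₁ has Krull dimension d and is equidimensional of dimension d: for every minimal prime ideal 𝔭 of R₁, the quotient ring R₁/𝔭 has Krull dimension d. -/
section EquidimHelpers

lemma exists_ltSeries_going_up {R S : Type*} [CommRing R] [CommRing S] [Algebra R S]
    [Algebra.IsIntegral R S] (hinj : Function.Injective (algebraMap R S))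
    (l : LTSeries (PrimeSpectrum R)) :
    ∃ L : LTSeries (PrimeSpectrum S), L.length = l.length ∧
      L.last.asIdeal.comap (algebraMap R S) = l.last.asIdeal := by
  induction l using RelSeries.inductionOn' with
  | singleton x =>
    obtain ⟨Q, -, hQ, hQx⟩ := Ideal.exists_ideal_over_prime_of_isIntegral x.asIdeal (⊥ : Ideal S)
      (by
        rw [← RingHom.ker_eq_comap_bot, (RingHom.injective_iff_ker_eq_bot _).mp hinj]
        exact bot_le)
    exact ⟨RelSeries.singleton _ ⟨Q, hQ⟩, rfl, hQx⟩
  | snoc p x hx ih =>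
    obtain ⟨L, hL, hLl⟩ := ih
    have hlt : p.last < x := hx
    obtain ⟨Q, hQge, hQ, hQx⟩ := Ideal.exists_ideal_over_prime_of_isIntegral x.asIdeal
      L.last.asIdeal (hLl.trans_le hlt.le)
    have hlt' : L.last < (⟨Q, hQ⟩ : PrimeSpectrum S) := by
      refine lt_of_le_of_ne hQge ?_
      intro h
      have h2 : L.last.asIdeal = Q := by rw [h]
      rw [h2, hQx] at hLl
      exact hlt.ne' (PrimeSpectrum.ext hLl)
    refine ⟨L.snoc ⟨Q, hQ⟩ hlt', ?_, ?_⟩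
    · simp [hL]
    · simpa using hQx

lemma ringKrullDim_eq_of_integral_injective {R S : Type*} [CommRing R] [CommRing S] [Algebra R S]
    [Algebra.IsIntegral R S] (hinj : Function.Injective (algebraMap R S)) :
    ringKrullDim S = ringKrullDim R := by
  apply le_antisymm
  · refine Order.krullDim_le_of_strictMono (PrimeSpectrum.comap (algebraMap R S)) ?_
    intro I J h
    exact Ideal.IsIntegral.comap_lt_comap (R := R) (I := I.asIdeal) (J := J.asIdeal) h
  · refine iSup_le fun l => ?_
    obtain ⟨L, hL, -⟩ := exists_ltSeries_going_up (S := S) hinj l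
    rw [← hL]
    exact le_iSup (fun L : LTSeries (PrimeSpectrum S) => ((L.length : ℕ∞) : WithBot ℕ∞)) L

end EquidimHelpers


/-- Newton's commutative-algebra lemma: if `R₀` is a Noetherian, integrally closed
(normal) integral domain of Krull dimension `d`, and `R₁` is a (nonzero) commutative
`R₀`-algebra that is integral over `R₀` and torsion-free as an `R₀`-module, then `R₁`
has Krull dimension `d` and is equidimensional of dimension `d`: every quotient by a
minimal prime has Krull dimension `d`. -/
theorem integral_torsionFree_equidimensional {R₀ R₁ : Type*}
    [CommRing R₀] [IsDomain R₀] [IsNoetherianRing R₀] [IsIntegrallyClosed R₀]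
    (d : ℕ) (hd : ringKrullDim R₀ = (d : WithBot ℕ∞))
    [CommRing R₁] [Nontrivial R₁] [Algebra R₀ R₁] [Algebra.IsIntegral R₀ R₁]
    [NoZeroSMulDivisors R₀ R₁] :
    ringKrullDim R₁ = (d : WithBot ℕ∞) ∧
      ∀ 𝔭 ∈ minimalPrimes R₁, ringKrullDim (R₁ ⧸ 𝔭) = (d : WithBot ℕ∞) := by
  have hreg : ∀ r : R₀, r ≠ 0 → algebraMap R₀ R₁ r ∈ nonZeroDivisors R₁ := by
    intro r hr
    rw [mem_nonZeroDivisors_iff_right]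
    intro x hx
    rw [mul_comm, ← Algebra.smul_def] at hx
    exact (NoZeroSMulDivisors.eq_zero_or_eq_zero_of_smul_eq_zero hx).resolve_left hr
  refine ⟨?_, fun 𝔭 h𝔭 => ?_⟩
  · rw [← hd]
    apply ringKrullDim_eq_of_integral_injective
    rw [injective_iff_map_eq_zero]
    intro r h0
    by_contra hr
    exact nonZeroDivisors.ne_zero (hreg r hr) h0
  · rw [← hd]
    apply ringKrullDim_eq_of_integral_injective
    rw [injective_iff_map_eq_zero]
    intro r h0
    by_contra hr
    have hmem : algebraMap R₀ R₁ r ∈ 𝔭 := Ideal.Quotient.eq_zero_iff_mem.mp h0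
    exact Set.disjoint_left.mp (Ideal.disjoint_nonZeroDivisors_of_mem_minimalPrimes h𝔭) hmem
      (hreg r hr)
end

section
/- Let R be a Noetherian integral domain with fraction field F. Let M and L be finitely generated projective R-modules and let i⁺ : M → L be an R-linear map. Write M* = Hom_R(M, R) and L* = Hom_R(L, R), and let j : L* → M* be the dual map λ ↦ λ ∘ i⁺. Let S ⊆ M* be the submodule of all μ ∈ M* whose image in M* ⊗_R F lies in the image of j ⊗ F : L* ⊗_R F → M* ⊗_R F. Then every μ ∈ S vanishes on ker(i⁺), and the induced evaluation map ker(i⁺) → Hom_R(M*/S, R), sending m to the functional (μ mod S) ↦ μ(m), is an isomorphism of R-modules. -/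
/-- The submodule `S ⊆ M*` of functionals whose image in `M* ⊗ F` (where `F` is the
fraction field of `R`) lies in the image of `j ⊗ F`, with `j = (i⁺)* : L* → M*` the dual
of `i⁺ : M → L`. -/
noncomputable def satSubmodule {R M L : Type*} [CommRing R]
    [AddCommGroup M] [Module R M] [AddCommGroup L] [Module R L]
    (iplus : M →ₗ[R] L) : Submodule R (Module.Dual R M) :=
  Submodule.comap ((TensorProduct.mk R (Module.Dual R M) (FractionRing R)).flip 1)
    (LinearMap.range (LinearMap.rTensor (FractionRing R) iplus.dualMap))

/-- The duality pairing `P₃`: for `R` a Noetherian domain, `M`, `L` finitely generated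
projective `R`-modules and `i⁺ : M → L`, every `μ ∈ S = M* ∩ j(L* ⊗ F)` vanishes on
`ker i⁺`, and the induced evaluation map identifies `ker i⁺` with `Hom_R(M*/S, R)`. -/
theorem ker_levelLowering_dual_iso {R M L : Type*} [CommRing R] [IsDomain R]
    [IsNoetherianRing R]
    [AddCommGroup M] [Module R M] [Module.Finite R M] [Module.Projective R M]
    [AddCommGroup L] [Module R L] [Module.Finite R L] [Module.Projective R L]
    (iplus : M →ₗ[R] L) :
    (∀ μ ∈ satSubmodule iplus, ∀ m ∈ LinearMap.ker iplus, μ m = 0) ∧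
    ∃ e : LinearMap.ker iplus ≃ₗ[R] ((Module.Dual R M ⧸ satSubmodule iplus) →ₗ[R] R),
      ∀ (m : LinearMap.ker iplus) (μ : Module.Dual R M),
        e m (Submodule.Quotient.mk μ) = μ m := by
  have h1 : ∀ μ ∈ satSubmodule iplus, ∀ m ∈ LinearMap.ker iplus, μ m = 0 := by
    rintro μ ⟨t, ht⟩ m hm
    have hz : (Module.Dual.eval R M m) ∘ₗ iplus.dualMap = 0 := by
      ext l
      simp [LinearMap.mem_ker.mp hm]
    have h := congrArg (LinearMap.rTensor (FractionRing R) (Module.Dual.eval R M m)) ht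
    rw [← LinearMap.comp_apply, ← LinearMap.rTensor_comp, hz] at h
    have h' := congrArg (TensorProduct.lid R (FractionRing R)) h
    simp only [LinearMap.rTensor_zero, LinearMap.zero_apply, map_zero, LinearMap.flip_apply,
      TensorProduct.mk_apply, LinearMap.rTensor_tmul, TensorProduct.lid_tmul,
      Module.Dual.eval_apply] at h'
    rw [← Algebra.algebraMap_eq_smul_one] at h'
    exact (IsFractionRing.injective R (FractionRing R)) (by rw [← h', map_zero])
  refine ⟨h1, ?_⟩
  let f : LinearMap.ker iplus →ₗ[R] ((Module.Dual R M ⧸ satSubmodule iplus) →ₗ[R] R) :=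
    { toFun := fun m => (satSubmodule iplus).liftQ (Module.Dual.eval R M m)
        (fun μ hμ => h1 μ hμ m m.2)
      map_add' := fun a b => by ext μ; exact map_add μ (a : M) b
      map_smul' := fun a b => by ext μ; exact map_smul μ a (b : M) }
  have hf : ∀ (m : LinearMap.ker iplus) (μ : Module.Dual R M),
      f m (Submodule.Quotient.mk μ) = μ m := fun m μ => rfl
  refine ⟨LinearEquiv.ofBijective f ⟨?_, ?_⟩, hf⟩
  · rw [injective_iff_map_eq_zero]
    intro m hm
    apply Subtype.ext
    refine (Module.forall_dual_apply_eq_zero_iff R (m : M)).mp fun μ => ?_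
    rw [← hf, hm]
    rfl
  · intro φ
    obtain ⟨m, hm⟩ := (Module.bijective_dual_eval R M).2 (φ ∘ₗ (satSubmodule iplus).mkQ)
    have hm' : ∀ μ : Module.Dual R M, μ m = φ (Submodule.Quotient.mk μ) :=
      fun μ => LinearMap.congr_fun hm μ
    have hk : m ∈ LinearMap.ker iplus := by
      rw [LinearMap.mem_ker]
      refine (Module.forall_dual_apply_eq_zero_iff R (iplus m)).mp fun l => ?_
      have hl : iplus.dualMap l ∈ satSubmodule iplus := ⟨TensorProduct.tmul R l 1, by simp⟩
      have := hm' (iplus.dualMap l)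
      rw [(Submodule.Quotient.mk_eq_zero _).mpr hl, map_zero] at this
      exact this
    refine ⟨⟨m, hk⟩, ?_⟩
    refine Submodule.linearMap_qext _ (LinearMap.ext fun μ => ?_)
    exact hm' μ
end

section
/- Let E be a field and σ : E → E a ring automorphism with σ ∘ σ = id and σ ≠ id, and assume char E ≠ 2. Let n ≥ 1 and let J be an invertible n × n matrix over E that is σ-hermitian: (J.map σ)ᵀ = J, where J.map σ applies σ to every entry. Then for every u ∈ E with u·σ(u) = 1 there exists an n × n matrix g over E such that (g.map σ)ᵀ · J · g = J and det g = u. Equivalently, the determinant map from the unitary group U(J)(E) = {g : (g.map σ)ᵀ J g = J} to the norm-one group {u ∈ E : u·σ(u) = 1} is surjective. -/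
open Matrix

lemma exists_anisotropic {E : Type*} [Field E] (σ : E →+* E) (h2 : (2 : E) ≠ 0)
    {n : ℕ} (hn : 1 ≤ n) (J : Matrix (Fin n) (Fin n) E) (hJ : IsUnit J)
    (hherm : (J.map σ)ᵀ = J) :
    ∃ v : Fin n → E, (fun k => σ (v k)) ⬝ᵥ (J *ᵥ v) ≠ 0 := by
  by_contra! h
  have hd : ∀ i, J i i = 0 := by
    intro i
    have := h (Pi.single i 1)
    have e : (fun k => σ ((Pi.single i (1 : E) : Fin n → E) k)) = Pi.single i 1 := by
      funext k
      by_cases hk : k = i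
      · subst hk; simp
      · simp [hk]
    rw [e] at this
    simpa using this
  have h0 : J = 0 := by
    ext i j
    by_contra ha
    have ha' : J i j ≠ 0 := by simpa using ha
    have hji : J j i = σ (J i j) := by
      conv_lhs => rw [← hherm]
      simp
    have := h (Pi.single i 1 + Pi.single j (J i j)⁻¹)
    have e : (fun k => σ ((Pi.single i (1 : E) + Pi.single j (J i j)⁻¹ : Fin n → E) k))
        = Pi.single i 1 + Pi.single j (σ (J i j))⁻¹ := by
      funext k
      simp only [Pi.add_apply, map_add, Pi.single_apply]
      split_ifs <;> simp
    rw [e] at this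
    have hs : σ (J i j) ≠ 0 := by simpa using ha'
    simp [mulVec_add, add_dotProduct, dotProduct_add, hd, hji, ha', hs] at this
    apply h2
    linear_combination this
  haveI : Nonempty (Fin n) := ⟨⟨0, hn⟩⟩
  exact hJ.ne_zero h0

/-- Surjectivity of the determinant from the unitary group of a nondegenerate
`σ`-hermitian form onto the norm-one group: for every `u` with `u·σ(u) = 1` there is a
matrix `g` with `(g.map σ)ᵀ · J · g = J` and `det g = u`. Here `σ` is a nontrivial ring
involution of the field `E`, `char E ≠ 2`, and `J` is an invertible `σ`-hermitian
matrix. -/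
theorem unitaryGroup_det_surjective {E : Type*} [Field E] (σ : E →+* E)
    (hσ2 : ∀ x : E, σ (σ x) = x) (hσ : σ ≠ RingHom.id E) (h2 : (2 : E) ≠ 0)
    {n : ℕ} (hn : 1 ≤ n) (J : Matrix (Fin n) (Fin n) E) (hJ : IsUnit J)
    (hherm : (J.map σ)ᵀ = J) :
    ∀ u : E, u * σ u = 1 →
      ∃ g : Matrix (Fin n) (Fin n) E, (g.map σ)ᵀ * J * g = J ∧ g.det = u := by
  intro u hu
  obtain ⟨v, hv⟩ := exists_anisotropic σ h2 hn J hJ hherm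
  let V : Matrix (Fin n) Unit E := replicateCol Unit v
  let W : Matrix Unit (Fin n) E := (V.map σ)ᵀ * J
  obtain ⟨q, hq⟩ : ∃ q, q = (W * V) () () := ⟨_, rfl⟩
  have hWV : W * V = q • (1 : Matrix Unit Unit E) := by
    ext a b
    simp [hq]
  have hVV : (V.map σ).map σ = V := by
    ext a b
    simp [hσ2]
  have hWs : (W.map σ)ᵀ = J * V := by
    simp only [W]
    rw [Matrix.map_mul, transpose_mul, hherm, transpose_map, transpose_transpose, hVV]
  have hq0 : q ≠ 0 := by
    rw [hq]
    simp only [W, Matrix.mul_assoc]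
    exact hv
  have hσq : σ q = q := by
    have h1 : ((W * V).map σ)ᵀ = W * V := by
      rw [Matrix.map_mul, transpose_mul, hWs, ← Matrix.mul_assoc]
    have h3 := congrFun (congrFun h1 ()) ()
    rw [transpose_apply, map_apply, ← hq] at h3
    exact h3
  obtain ⟨c, hc⟩ : ∃ c, c = (u - 1) / q := ⟨_, rfl⟩
  have hcu : u = 1 + c * q := by
    rw [hc]; field_simp; ring
  have hcc : c + σ c + σ c * c * q = 0 := by
    rw [hcu] at hu
    simp only [map_add, map_mul, map_one, hσq] at hu
    apply mul_left_cancel₀ hq0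
    linear_combination hu
  refine ⟨1 + V * (c • W), ?_, ?_⟩
  · have hg : ((1 + V * (c • W)).map σ)ᵀ = 1 + σ c • (J * V * (V.map σ)ᵀ) := by
      rw [Matrix.map_add _ (map_add σ), Matrix.map_mul, transpose_add, transpose_mul,
        Matrix.map_one _ (map_zero σ) (map_one σ), transpose_one]
      have : (c • W).map σ = σ c • W.map σ := by
        ext a b
        simp
      rw [this, transpose_smul, hWs, smul_mul]
    rw [hg]
    have hX : J * V * (V.map σ)ᵀ * J = J * V * W := by
      rw [Matrix.mul_assoc (J * V)]
    have hY : J * V * W * (V * W) = q • (J * V * W) := by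
      rw [Matrix.mul_assoc (J * V), ← Matrix.mul_assoc W, hWV]
      simp
    rw [Matrix.add_mul, smul_mul, hX, Matrix.mul_add, Matrix.mul_smul, Matrix.mul_one,
      Matrix.mul_smul, Matrix.add_mul, smul_mul, hY, Matrix.one_mul, ← Matrix.mul_assoc J]
    have : J + σ c • (J * V * W) + c • (J * V * W + σ c • q • (J * V * W))
        = J + (c + σ c + σ c * c * q) • (J * V * W) := by
      module
    rw [this, hcc, zero_smul, add_zero]
  · rw [det_one_add_mul_comm, smul_mul, hWV, hcu]
    simp
end

section
/- Let E be a field and σ : E → E a ring automorphism with σ ∘ σ = id and σ ≠ id. Let n ≥ 1 and let J be an invertible n × n matrix over E that is σ-hermitian: (J.map σ)ᵀ = J, where J.map σ applies σ to every entry. Then there exists a vector v ∈ Eⁿ that is anisotropic for J, i.e. Σ_{i,j} σ(vᵢ)·J_{ij}·vⱼ ≠ 0. -/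
open Matrix

/-- A nondegenerate `σ`-hermitian form (for a nontrivial involution `σ` of the field `E`)
on a nonzero space admits an anisotropic vector: there is `v ∈ Eⁿ` with
`Σ_{i,j} σ(vᵢ)·J_{ij}·vⱼ ≠ 0`. -/
theorem exists_anisotropic_vector {E : Type*} [Field E] (σ : E →+* E)
    (hσ2 : ∀ x : E, σ (σ x) = x) (hσ : σ ≠ RingHom.id E)
    {n : ℕ} (hn : 1 ≤ n) (J : Matrix (Fin n) (Fin n) E) (hJ : IsUnit J)
    (hherm : (J.map σ)ᵀ = J) :
    ∃ v : Fin n → E, ∑ i : Fin n, ∑ j : Fin n, σ (v i) * J i j * v j ≠ 0 := by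
  by_contra hcon
  push Not at hcon
  obtain ⟨c, hc⟩ : ∃ c, σ c ≠ c := by
    by_contra h
    push Not at h
    exact hσ (RingHom.ext h)
  have hB : ∀ v : Fin n → E, (fun i => σ (v i)) ⬝ᵥ (J *ᵥ v) = 0 := by
    intro v
    rw [← hcon v]
    simp only [dotProduct, mulVec, Finset.mul_sum, mul_assoc]
  have key : ∀ u v : Fin n → E,
      (fun i => σ (u i)) ⬝ᵥ (J *ᵥ v) + (fun i => σ (v i)) ⬝ᵥ (J *ᵥ u) = 0 := by
    intro u v
    have h := hB (u + v)
    have e : (fun i => σ ((u + v) i)) = (fun i => σ (u i)) + (fun i => σ (v i)) := by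
      ext i; simp
    rw [e, mulVec_add, add_dotProduct, dotProduct_add, dotProduct_add, hB u, hB v] at h
    simpa using h
  have hz : ∀ u v : Fin n → E, (fun i => σ (u i)) ⬝ᵥ (J *ᵥ v) = 0 := by
    intro u v
    have h1 := key u v
    have h2 := key u (c • v)
    have e : (fun i => σ ((c • v) i)) = σ c • (fun i => σ (v i)) := by
      ext i; simp
    rw [e, mulVec_smul, dotProduct_smul, smul_dotProduct, smul_eq_mul, smul_eq_mul] at h2
    have h3 : (σ c - c) * ((fun i => σ (u i)) ⬝ᵥ (J *ᵥ v)) = 0 := by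
      linear_combination σ c * h1 - h2
    exact (mul_eq_zero.mp h3).resolve_left (sub_ne_zero.mpr hc)
  have hJ0 : J = 0 := by
    ext i j
    have h := hz (Pi.single i 1) (Pi.single j 1)
    have e : (fun k => σ ((Pi.single i 1 : Fin n → E) k)) = Pi.single i 1 := by
      ext k
      by_cases hk : k = i
      · subst hk; simp
      · simp [hk]
    rw [e] at h
    simpa using h
  haveI : Nonempty (Fin n) := ⟨⟨0, hn⟩⟩
  rw [hJ0] at hJ
  exact not_isUnit_zero hJ
end

section
/- Let H be a commutative ring, let c, d ∈ H with d a unit, and let T ∈ H. Let M₀ and M₁ be H-modules with M₀ finitely generated, and let A : M₀ → M₁ and B : M₁ → M₀ be H-linear maps such that B(A(m)) = (T + c)·m for all m ∈ M₀. Define the H-linear map Φ : M₀ ⊕ M₁ → M₀ ⊕ M₁ by Φ(f₀, f₁) = (c·f₀ + B(f₁), A(f₀) + d·f₁). If 𝔭 is a prime ideal of H such that T − c·(d − 1) ∈ 𝔭 and 𝔭 lies in the support of M₀ (i.e. the localization (M₀)_𝔭 is nonzero), then 𝔭 lies in the support of coker Φ (i.e. (coker Φ)_𝔭 ≠ 0).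 -/
/-- Commutative-algebra core of the level raising proposition: let `c, d, T ∈ H` with `d`
a unit, `M₀` finitely generated, `A : M₀ → M₁`, `B : M₁ → M₀` with `B ∘ A = (T + c)·id`,
and `Φ(f₀, f₁) = (c·f₀ + B f₁, A f₀ + d·f₁)`. If a prime `𝔭` contains `T − c·(d − 1)` and
lies in the support of `M₀`, then `𝔭` lies in the support of `coker Φ`. -/
theorem prime_mem_support_coker_of_levelRaising {H : Type*} [CommRing H]
    (c d T : H) (hd : IsUnit d)
    {M₀ M₁ : Type*} [AddCommGroup M₀] [Module H M₀] [AddCommGroup M₁] [Module H M₁]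
    [Module.Finite H M₀]
    (A : M₀ →ₗ[H] M₁) (B : M₁ →ₗ[H] M₀)
    (hBA : ∀ m : M₀, B (A m) = (T + c) • m)
    (Φ : (M₀ × M₁) →ₗ[H] (M₀ × M₁))
    (hΦ : ∀ (f₀ : M₀) (f₁ : M₁), Φ (f₀, f₁) = (c • f₀ + B f₁, A f₀ + d • f₁))
    (𝔭 : PrimeSpectrum H) (hT : T - c * (d - 1) ∈ 𝔭.asIdeal)
    (hsupp : 𝔭 ∈ Module.support H M₀) :
    𝔭 ∈ Module.support H ((M₀ × M₁) ⧸ LinearMap.range Φ) := by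
  have hx : 𝔭 ∈ Module.support H (QuotSMulTop (T - c * (d - 1)) M₀) := by
    rw [Module.support_quotSMulTop]
    exact ⟨hsupp, by simpa [PrimeSpectrum.mem_zeroLocus] using hT⟩
  let g : (M₀ × M₁) →ₗ[H] QuotSMulTop (T - c * (d - 1)) M₀ :=
    (Submodule.mkQ _).comp (d • LinearMap.fst H M₀ M₁ - B.comp (LinearMap.snd H M₀ M₁))
  have hg : LinearMap.range Φ ≤ LinearMap.ker g := by
    rintro _ ⟨⟨f₀, f₁⟩, rfl⟩
    rw [LinearMap.mem_ker, hΦ]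
    simp only [g, LinearMap.comp_apply, Submodule.mkQ_apply, Submodule.Quotient.mk_eq_zero]
    have : (d • LinearMap.fst H M₀ M₁ - B.comp (LinearMap.snd H M₀ M₁))
        (c • f₀ + B f₁, A f₀ + d • f₁) = (T - c * (d - 1)) • (-f₀) := by
      simp only [LinearMap.sub_apply, LinearMap.smul_apply, LinearMap.comp_apply,
        LinearMap.fst_apply, LinearMap.snd_apply, map_add, map_smul, hBA]
      module
    rw [this]
    exact Submodule.smul_mem_pointwise_smul _ _ _ trivial
  refine Module.support_subset_of_surjective ((LinearMap.range Φ).liftQ g hg) ?_ hx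
  intro y
  obtain ⟨m, rfl⟩ := Submodule.mkQ_surjective _ y
  obtain ⟨u, rfl⟩ := hd
  refine ⟨Submodule.Quotient.mk ((↑u⁻¹ : H) • m, 0), ?_⟩
  simp [g, smul_smul]
end

section
/- Let p be a prime, n ≥ 2, R an integral domain, and χ₁, …, χ_n : ℤ_pˣ → Rˣ group homomorphisms. Let Iw ⊆ GL_n(ℤ_p) be the Iwahori subgroup (matrices invertible over ℤ_p whose strictly lower-triangular entries lie in pℤ_p), and let B ⊆ Iw be the subgroup of upper-triangular matrices. Suppose there exists a function f : Iw → R, not identically zero, such that f(h·b) = f(h) · Πᵢ χᵢ(b_{ii}) for all h ∈ Iw and b ∈ B, and f(g·h) = f(h) for all h ∈ Iw and all g ∈ Iw with det g = 1. Then χ₁ = χ₂ = ⋯ = χ_n. -/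
theorem iw_iff_aux {p : ℕ} [Fact p.Prime] {n : ℕ} (h : Matrix (Fin n) (Fin n) ℤ_[p]) :
    (∀ i j : Fin n, j < i → (p : ℤ_[p]) ∣ h i j) ↔
      Matrix.BlockTriangular
        (h.map (Ideal.Quotient.mk (Ideal.span {(p : ℤ_[p])}))) (id : Fin n → Fin n) := by
  simp only [Matrix.BlockTriangular, Matrix.map_apply, Ideal.Quotient.eq_zero_iff_mem,
    Ideal.mem_span_singleton, id]

theorem iw_conj_aux {p : ℕ} [Fact p.Prime] {n : ℕ} (h : (Matrix (Fin n) (Fin n) ℤ_[p])ˣ)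
    (d : Fin n → ℤ_[p])
    (hh : ∀ i j : Fin n, j < i → (p : ℤ_[p]) ∣ h.1 i j) :
    ∀ i j : Fin n, j < i → (p : ℤ_[p]) ∣ (h.1 * Matrix.diagonal d * h⁻¹.1) i j := by
  rw [iw_iff_aux] at hh ⊢
  set φ := Ideal.Quotient.mk (Ideal.span {(p : ℤ_[p])}) with hφ
  have e : (h.1.map φ) * (h⁻¹.1.map φ) = 1 := by
    rw [← Matrix.map_mul, Units.mul_inv]
    simp
  have e2 : (h⁻¹.1.map φ) = (h.1.map φ)⁻¹ := (Matrix.inv_eq_right_inv e).symm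
  let _ : Invertible (h.1.map φ) := ⟨_, mul_eq_one_comm.1 e, e⟩
  rw [Matrix.map_mul, Matrix.map_mul, e2]
  refine (hh.mul ?_).mul (Matrix.blockTriangular_inv_of_blockTriangular hh)
  rw [Matrix.diagonal_map (map_zero φ)]
  exact Matrix.blockTriangular_diagonal _

/-- Centrality of the weight in part (2) of the abelian Ihara lemma: if a function `f`
on the Iwahori subgroup `Iw ⊆ GL_n(ℤ_p)` (matrices invertible over `ℤ_p` with strictly
lower-triangular entries divisible by `p`), not identically zero on `Iw`, transforms
under right translation by upper-triangular `b ∈ B` through `Πᵢ χᵢ(bᵢᵢ)` and is invariant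
under left translation by determinant-one elements of `Iw`, then `χ₁ = ⋯ = χ_n`. -/
theorem weight_central_of_abelian_invariance {p : ℕ} [Fact p.Prime] {n : ℕ} (hn : 2 ≤ n)
    {R : Type*} [CommRing R] [IsDomain R]
    (χ : Fin n → (ℤ_[p]ˣ →* Rˣ))
    (f : Matrix (Fin n) (Fin n) ℤ_[p] → R)
    (hne : ∃ h : Matrix (Fin n) (Fin n) ℤ_[p],
      (IsUnit h ∧ ∀ i j : Fin n, j < i → (p : ℤ_[p]) ∣ h i j) ∧ f h ≠ 0)
    (hright : ∀ (h b : Matrix (Fin n) (Fin n) ℤ_[p]) (u : Fin n → ℤ_[p]ˣ),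
      (IsUnit h ∧ ∀ i j : Fin n, j < i → (p : ℤ_[p]) ∣ h i j) →
      (∀ i j : Fin n, j < i → b i j = 0) → (∀ i : Fin n, b i i = u i) →
      f (h * b) = f h * ∏ i : Fin n, ((χ i (u i) : Rˣ) : R))
    (hleft : ∀ g h : Matrix (Fin n) (Fin n) ℤ_[p],
      (IsUnit g ∧ ∀ i j : Fin n, j < i → (p : ℤ_[p]) ∣ g i j) → g.det = 1 →
      (IsUnit h ∧ ∀ i j : Fin n, j < i → (p : ℤ_[p]) ∣ h i j) →
      f (g * h) = f h) :
    ∀ i j : Fin n, χ i = χ j := by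
  classical
  obtain ⟨h0, ⟨⟨h, rfl⟩, hIw⟩, hf⟩ := hne
  intro i j
  by_cases hij : i = j
  · rw [hij]
  ext1 a
  let u : Fin n → ℤ_[p]ˣ := Pi.mulSingle i a * Pi.mulSingle j a⁻¹
  have hprod : ∀ {M : Type _} [CommMonoid M] (ψ : Fin n → (ℤ_[p]ˣ →* M)),
      ∏ k, ψ k (u k) = ψ i a * ψ j a⁻¹ := by
    intro M _ ψ
    simp only [u, Pi.mul_apply, map_mul, Finset.prod_mul_distrib]
    congr 1
    · rw [Finset.prod_eq_single i]
      · simp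
      · intro b _ hb; simp [Pi.mulSingle_eq_of_ne hb]
      · simp
    · rw [Finset.prod_eq_single j]
      · simp
      · intro b _ hb; simp [Pi.mulSingle_eq_of_ne hb]
      · simp
  let d : Fin n → ℤ_[p] := fun k => (u k : ℤ_[p])
  have hdet : (Matrix.diagonal d).det = 1 := by
    rw [Matrix.det_diagonal]
    have := hprod (fun _ => Units.coeHom ℤ_[p])
    simpa [d] using this
  have hgdet : (h.1 * Matrix.diagonal d * h⁻¹.1).det = 1 := by
    rw [Matrix.det_mul, Matrix.det_mul, hdet, mul_one, ← Matrix.det_mul, Units.mul_inv,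
      Matrix.det_one]
  have h1 := hleft (h.1 * Matrix.diagonal d * h⁻¹.1) h.1
    ⟨(Matrix.isUnit_iff_isUnit_det _).2 (by rw [hgdet]; exact isUnit_one),
      iw_conj_aux h d hIw⟩ hgdet ⟨h.isUnit, hIw⟩
  rw [mul_assoc, Units.inv_mul, mul_one,
    hright h.1 (Matrix.diagonal d) u ⟨h.isUnit, hIw⟩
      (fun i j hlt => Matrix.diagonal_apply_ne _ hlt.ne')
      (fun i => by simp [d])] at h1
  have h2 : ∏ k, ((χ k (u k) : Rˣ) : R) = 1 := mul_left_cancel₀ hf (by rw [h1, mul_one])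
  have h3 : ∏ k, χ k (u k) = 1 := by
    ext
    simpa using h2
  have h4 : ∏ k, χ k (u k) = χ i a * χ j a⁻¹ := by
    simp only [u, Pi.mul_apply, map_mul, Finset.prod_mul_distrib]
    congr 1
    · rw [Finset.prod_eq_single i]
      · simp
      · intro b _ hb; simp [Pi.mulSingle_eq_of_ne hb]
      · simp
    · rw [Finset.prod_eq_single j]
      · simp
      · intro b _ hb; simp [Pi.mulSingle_eq_of_ne hb]
      · simp
  rw [h4, map_inv, mul_inv_eq_one] at h3
  exact h3
end
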